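/- An element i is initial if and only if it is minimal with respect to the chain preorder: for a valid chain element i, i is initial (i.e., Sum.inl p with p ∈ P and p ∉ g '' Q, or Sum.inr q with q ∈ Q and q ∉ f '' P) if and only if for every valid chain element x with x ⊑ i one has x = i. -/

import Mathlib

def SB.Valid {α β : Type*} (P : Set α) (Q : Set β) : α ⊕ β → Prop
  | Sum.inl p => p ∈ P
  | Sum.inr q => q ∈ Q

def SB.step {α β : Type*} (f : α → β) (g : β → α) : α ⊕ β → α ⊕ β
  | Sum.inl p => Sum.inr (f p)
  | Sum.inr q => Sum.inl (g q)

def SB.ChainLE {α β : Type*} (f : α → β) (g : β → α) : α ⊕ β → α ⊕ β → Prop :=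
  Relation.ReflTransGen (fun x y => y = SB.step f g x)

def SB.Initial {α β : Type*} (P : Set α) (Q : Set β) (f : α → β) (g : β → α) :
    α ⊕ β → Prop
  | Sum.inl p => p ∉ g '' Q
  | Sum.inr q => q ∉ f '' P

/-! A nontrivial chain ending at `i` has a last step `b ↦ i`, and if the chain starts at a valid
element then `b` is valid, because steps preserve validity. Hence `i` is minimal as soon as it has
no valid predecessor. Conversely, a valid predecessor of `i` lies below `i` and differs from it,
because steps switch summands. -/

section Relation

open Relation

variable {γ : Type*} {r : γ → γ → Prop} {p : γ → Prop} {a b : γ}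

theorem of_reflTransGen (hp : ∀ ⦃x y⦄, p x → r x y → p y) (hab : ReflTransGen r a b)
    (ha : p a) : p b := by
  induction hab with
  | refl => exact ha
  | tail _ hxy hx => exact hp hx hxy

theorem forall_not_rel_iff_forall_reflTransGen_imp_eq (hp : ∀ ⦃x y⦄, p x → r x y → p y)
    (hb : ¬ r b b) :
    (∀ x, p x → ¬ r x b) ↔ ∀ x, p x → ReflTransGen r x b → x = b := by
  constructor
  · intro no_pred x hx hxb
    obtain rfl | ⟨c, hxc, hcb⟩ := hxb.cases_tail
    · rfl
    · exact absurd hcb (no_pred c (of_reflTransGen hp hxc hx))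
  · intro minimal x hx hxb
    obtain rfl := minimal x hx (.single hxb)
    exact hb hxb

end Relation

namespace SB

variable {α β : Type*} {P : Set α} {Q : Set β} {f : α → β} {g : β → α}

theorem step_ne_self (x : α ⊕ β) : step f g x ≠ x := by
  cases x <;> simp [step]

theorem Valid.step (hf : Set.MapsTo f P Q) (hg : Set.MapsTo g Q P) {x : α ⊕ β}
    (hx : Valid P Q x) : Valid P Q (step f g x) :=
  match x, hx with
  | .inl _, hp => hf hp
  | .inr _, hq => hg hq

theorem initial_iff_forall_valid_ne_step {i : α ⊕ β} :
    Initial P Q f g i ↔ ∀ x, Valid P Q x → i ≠ step f g x := by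
  cases i <;> simp [Initial, Valid, step, eq_comm]

end SB

theorem initial_iff_minimal_general {α β : Type*} {P : Set α} {Q : Set β}
    {f : α → β} {g : β → α} (hf : Set.MapsTo f P Q) (hg : Set.MapsTo g Q P) (i : α ⊕ β) :
    SB.Initial P Q f g i ↔
      ∀ x : α ⊕ β, SB.Valid P Q x → SB.ChainLE f g x i → x = i :=
  SB.initial_iff_forall_valid_ne_step.trans <|
    forall_not_rel_iff_forall_reflTransGen_imp_eq (r := fun x y => y = SB.step f g x)
      (fun _ _ hx hxy => hxy ▸ hx.step hf hg) (SB.step_ne_self i).symm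

theorem initial_iff_minimal {α β : Type*} (P : Set α) (Q : Set β)
    (f : α → β) (g : β → α)
    (hfm : Set.MapsTo f P Q) (hfi : Set.InjOn f P)
    (hgm : Set.MapsTo g Q P) (hgi : Set.InjOn g Q)
    (i : α ⊕ β) (hi : SB.Valid P Q i) :
    SB.Initial P Q f g i ↔
      ∀ x : α ⊕ β, SB.Valid P Q x → SB.ChainLE f g x i → x = i :=
  initial_iff_minimal_general hfm hgm i
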